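/- Let A, B, C be a nondegenerate triangle in the Euclidean plane with side lengths a = dist B C, b = dist C A, c = dist A B, incenter I (barycentric weights (a, b, c)), circumcenter O, and excenters I₁, I₂, I₃ (barycentric weights (−a, b, c), (a, −b, c), (a, b, −c)). Then the circumcenter of the excentral triangle I₁I₂I₃ (the Bevan point) equals 2•O − I, the reflection of the incenter in the circumcenter. -/

import Mathlib

open EuclideanGeometry RealInnerProductSpace

/-- The barycentric combination of three points with weights `u, v, w`. -/
noncomputable def bary (P Q R : EuclideanSpace ℝ (Fin 2)) (u v w : ℝ) :
    EuclideanSpace ℝ (Fin 2) :=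
  (u / (u + v + w)) • P + (v / (u + v + w)) • Q + (w / (u + v + w)) • R

/-- Evaluation of a two-variable real polynomial at a point of the plane. -/
noncomputable def mvEval (f : MvPolynomial (Fin 2) ℝ)
    (p : EuclideanSpace ℝ (Fin 2)) : ℝ :=
  MvPolynomial.eval (fun i => p i) f

/-!
The midpoint `M` of the incenter `I` and an excenter lies on the circumcircle. The homothety with
center `I` and ratio `2` sends `M` to that excenter and `O` to `2 • O - I`, so `2 • O - I` is at
distance `2R` from all three excenters. Each vertex of the triangle lies on the line through two
excenters, so the excenters span its plane, and this plane contains only one point equidistant from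
them.
-/

section AffineSpan

variable {k V P : Type*} [AddCommGroup V] [AddTorsor V P] {A B C : P}

theorem affineIndependent_rotate [DivisionRing k] [Module k V]
    (h : AffineIndependent k ![A, B, C]) : AffineIndependent k ![B, C, A] := by
  rw [affineIndependent_iff_not_collinear_set] at h ⊢
  rwa [Set.insert_comm, Set.pair_comm, Set.insert_comm, Set.insert_comm C] at h

theorem affineSpan_triple_eq_top [DivisionRing k] [Module k V]
    (h : AffineIndependent k ![A, B, C]) (hV : Module.finrank k V = 2) :
    affineSpan k {A, B, C} = ⊤ := by
  have : FiniteDimensional k V := Module.finite_of_finrank_eq_succ hV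
  have htop := h.affineSpan_eq_top_iff_card_eq_finrank_add_one.2 (by rw [Fintype.card_fin, hV])
  rwa [Matrix.range_cons, Matrix.range_cons_cons_empty, Set.singleton_union] at htop

end AffineSpan

section Dist

theorem dist_lt_dist_add_dist_of_affineIndependent {V P : Type*} [NormedAddCommGroup V]
    [NormedSpace ℝ V] [StrictConvexSpace ℝ V] [MetricSpace P] [NormedAddTorsor V P] {A B C : P}
    (h : AffineIndependent ℝ ![A, B, C]) : dist C A < dist A B + dist B C :=
  dist_comm A C ▸ dist_lt_dist_add_dist_iff.2 fun hB ↦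
    affineIndependent_iff_not_collinear_set.1 h hB.collinear

theorem dist_two_smul_sub {V : Type*} [SeminormedAddCommGroup V] [NormedSpace ℝ V] (O X Y : V) :
    dist ((2 : ℝ) • O - X) Y = 2 * dist O (midpoint ℝ X Y) := by
  have h : (2 : ℝ) • O - X - Y = (2 : ℝ) • (O - midpoint ℝ X Y) := by
    rw [midpoint_eq_smul_add, invOf_eq_inv]
    module
  rw [dist_eq_norm, dist_eq_norm, h, norm_smul, Real.norm_two]

theorem eq_of_mem_affineSpan_of_dist_eq {V P : Type*} [NormedAddCommGroup V]
    [InnerProductSpace ℝ V] [MetricSpace P] [NormedAddTorsor V P] {s : Set P} {X Y : P} {r t : ℝ}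
    (hX : X ∈ affineSpan ℝ s) (hY : Y ∈ affineSpan ℝ s)
    (hXs : ∀ p ∈ s, dist X p = r) (hYs : ∀ p ∈ s, dist Y p = t) : X = Y := by
  have hperp : vectorSpan ℝ s ≤ (ℝ ∙ (X -ᵥ Y))ᗮ := by
    refine Submodule.span_le.2 ?_
    rintro _ ⟨p, hp, q, hq, rfl⟩
    refine Submodule.mem_orthogonal_singleton_iff_inner_right.2 ?_
    refine inner_vsub_vsub_of_dist_eq_of_dist_eq ?_ ?_
    · rw [dist_comm q, dist_comm p, hYs q hq, hYs p hp]
    · rw [dist_comm q, dist_comm p, hXs q hq, hXs p hp]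
  have hmem : X -ᵥ Y ∈ vectorSpan ℝ s := by
    rw [← direction_affineSpan]
    exact AffineSubspace.vsub_mem_direction hX hY
  have hself : inner ℝ (X -ᵥ Y) (X -ᵥ Y) = 0 :=
    Submodule.mem_orthogonal_singleton_iff_inner_left.1 (hperp hmem)
  exact vsub_eq_zero_iff_eq.1 (inner_self_eq_zero.1 hself)

theorem norm_sum_smul_sq {V ι : Type*} [NormedAddCommGroup V] [InnerProductSpace ℝ V]
    (t : Finset ι) (w : ι → ℝ) (y : ι → V) :
    ‖∑ i ∈ t, w i • y i‖ ^ 2 = (∑ i ∈ t, w i) * ∑ i ∈ t, w i * ‖y i‖ ^ 2 -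
      (∑ i ∈ t, ∑ j ∈ t, w i * w j * ‖y i - y j‖ ^ 2) / 2 := by
  have hinner (i j : ι) : w i * (w j * inner ℝ (y i) (y j)) =
      (w i * (w j * ‖y j‖ ^ 2) + w i * ‖y i‖ ^ 2 * w j - w i * w j * ‖y i - y j‖ ^ 2) / 2 := by
    rw [norm_sub_sq_real]
    ring
  rw [← real_inner_self_eq_norm_sq]
  simp_rw [sum_inner, inner_sum, real_inner_smul_left, real_inner_smul_right, hinner,
    ← Finset.sum_div, Finset.sum_sub_distrib, Finset.sum_add_distrib, ← Finset.mul_sum,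
    ← Finset.sum_mul]
  ring

end Dist

section CenterMass

open Finset

theorem centerMass_mem_affineSpan {k V ι : Type*} [Field k] [AddCommGroup V] [Module k V]
    {t : Finset ι} {w : ι → k} (hw : ∑ i ∈ t, w i ≠ 0) (z : ι → V) :
    t.centerMass w z ∈ affineSpan k (Set.range z) := by
  have h : ∑ i ∈ t, ((∑ j ∈ t, w j)⁻¹ • w) i = 1 := by
    simp only [Pi.smul_apply, smul_eq_mul, ← mul_sum, inv_mul_cancel₀ hw]
  rw [← t.centerMass_smul_left z (inv_ne_zero hw), ← affineCombination_eq_centerMass h]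
  exact affineCombination_mem_affineSpan h z

theorem dist_sq_centerMass {V ι : Type*} [NormedAddCommGroup V] [InnerProductSpace ℝ V]
    {t : Finset ι} {w : ι → ℝ} (hw : ∑ i ∈ t, w i ≠ 0) (p : V) (z : ι → V) :
    dist p (t.centerMass w z) ^ 2 = t.centerMass w (fun i ↦ dist p (z i) ^ 2) -
      (∑ i ∈ t, ∑ j ∈ t, w i * w j * dist (z i) (z j) ^ 2) / (2 * (∑ i ∈ t, w i) ^ 2) := by
  have hsub : t.centerMass w z - p = (∑ i ∈ t, w i)⁻¹ • ∑ i ∈ t, w i • (z i - p) := by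
    simp only [centerMass, smul_sub, sum_sub_distrib, ← sum_smul, inv_smul_smul₀ hw]
  simp only [dist_comm p, dist_eq_norm, hsub, norm_smul, mul_pow, norm_sum_smul_sq,
    sub_sub_sub_cancel_right, norm_inv, inv_pow, Real.norm_eq_abs, sq_abs]
  simp only [centerMass, smul_eq_mul]
  field_simp

section Triple

variable {k V : Type*} [Field k] [AddCommGroup V] [Module k V]

theorem centerMass_triple (u v w : k) (A B C : V) : univ.centerMass ![u, v, w] ![A, B, C] =
    (u / (u + v + w)) • A + (v / (u + v + w)) • B + (w / (u + v + w)) • C := by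
  simp only [centerMass, Fin.sum_univ_three, Matrix.cons_val, smul_add, smul_smul, div_eq_inv_mul]

theorem centerMass_triple_rotate (u v w : k) (A B C : V) :
    univ.centerMass ![v, w, u] ![B, C, A] = univ.centerMass ![u, v, w] ![A, B, C] := by
  rw [centerMass_triple, centerMass_triple, show v + w + u = u + v + w by ring]
  abel

theorem centerMass_triple_mem_affineSpan {u v w : k} (h : u + v + w ≠ 0) (A B C : V) :
    univ.centerMass ![u, v, w] ![A, B, C] ∈ affineSpan k {A, B, C} := by
  have hmem := centerMass_mem_affineSpan ((Fin.sum_univ_three ![u, v, w]).trans_ne h) ![A, B, C]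
  rwa [Matrix.range_cons, Matrix.range_cons_cons_empty, Set.singleton_union] at hmem

variable [Invertible (2 : k)] {u v w : k}

theorem midpoint_centerMass_triple_neg (h : u + v + w ≠ 0) (h₁ : -u + v + w ≠ 0) (A B C : V) :
    midpoint k (univ.centerMass ![u, v, w] ![A, B, C]) (univ.centerMass ![-u, v, w] ![A, B, C]) =
      univ.centerMass ![-u ^ 2, v * (v + w), w * (v + w)] ![A, B, C] := by
  have h2 : (2 : k) ≠ 0 := Invertible.ne_zero 2
  have hsum : -u ^ 2 + v * (v + w) + w * (v + w) = (u + v + w) * (-u + v + w) := by ring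
  simp only [centerMass_triple, midpoint_eq_smul_add, invOf_eq_inv, hsum]
  match_scalars <;> field_simp <;> ring

theorem mem_affineSpan_pair_centerMass_triple (hu : u ≠ 0) (h₂ : u + -v + w ≠ 0)
    (h₃ : u + v + -w ≠ 0) (A B C : V) :
    A ∈ line[k, univ.centerMass ![u, -v, w] ![A, B, C],
      univ.centerMass ![u, v, -w] ![A, B, C]] := by
  have h2 : (2 : k) ≠ 0 := Invertible.ne_zero 2
  have hA : AffineMap.lineMap (univ.centerMass ![u, -v, w] ![A, B, C])
      (univ.centerMass ![u, v, -w] ![A, B, C]) ((u + v + -w) / (2 * u)) = A := by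
    rw [AffineMap.lineMap_apply_module, centerMass_triple, centerMass_triple]
    match_scalars <;> field_simp <;> ring
  have hmem := AffineMap.lineMap_mem_affineSpan_pair ((u + v + -w) / (2 * u))
    (univ.centerMass ![u, -v, w] ![A, B, C]) (univ.centerMass ![u, v, -w] ![A, B, C])
  rwa [hA] at hmem

theorem affineSpan_triple_le_affineSpan_centerMass_neg (hu : u ≠ 0) (hv : v ≠ 0) (hw : w ≠ 0)
    (h₁ : -u + v + w ≠ 0) (h₂ : u + -v + w ≠ 0) (h₃ : u + v + -w ≠ 0) (A B C : V) :
    affineSpan k {A, B, C} ≤ affineSpan k {univ.centerMass ![-u, v, w] ![A, B, C],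
      univ.centerMass ![u, -v, w] ![A, B, C], univ.centerMass ![u, v, -w] ![A, B, C]} := by
  have hA := mem_affineSpan_pair_centerMass_triple hu h₂ h₃ A B C
  have hB := mem_affineSpan_pair_centerMass_triple hv (by rwa [add_rotate] at h₃)
    (by rwa [add_rotate] at h₁) B C A
  have hC := mem_affineSpan_pair_centerMass_triple hw (by rwa [← add_rotate] at h₁)
    (by rwa [← add_rotate] at h₂) C A B
  rw [centerMass_triple_rotate u v (-w), centerMass_triple_rotate (-u) v w] at hB
  rw [← centerMass_triple_rotate w (-u) v, ← centerMass_triple_rotate w u (-v)] at hC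
  refine affineSpan_le.2 ?_
  rintro _ (rfl | rfl | rfl)
  · exact affineSpan_mono k (by grind) hA
  · exact affineSpan_mono k (by grind) hB
  · exact affineSpan_mono k (by grind) hC

end Triple

section Circumcircle

variable {V : Type*} [NormedAddCommGroup V] [InnerProductSpace ℝ V] {A B C O : V} {R : ℝ}

theorem dist_centerMass_triple_eq_iff {u v w : ℝ} (hA : dist O A = R) (hB : dist O B = R)
    (hC : dist O C = R) (h : u + v + w ≠ 0) :
    dist O (univ.centerMass ![u, v, w] ![A, B, C]) = R ↔
      v * w * dist B C ^ 2 + w * u * dist C A ^ 2 + u * v * dist A B ^ 2 = 0 := by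
  have hsum : ∑ i, ![u, v, w] i = u + v + w := Fin.sum_univ_three _
  have hR : (fun i ↦ dist O (![A, B, C] i) ^ 2) = Function.const _ (R ^ 2) := by
    funext i
    fin_cases i <;> simp [hA, hB, hC]
  rw [← sq_eq_sq₀ dist_nonneg (hA ▸ dist_nonneg), dist_sq_centerMass (hsum.trans_ne h), hR,
    centerMass_const (hsum.trans_ne h), hsum, sub_eq_self, div_eq_zero_iff,
    or_iff_left (by positivity)]
  simp only [Fin.sum_univ_three, Matrix.cons_val, dist_self, dist_comm B A, dist_comm C B,
    dist_comm A C]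
  constructor <;> intro h <;> linarith

theorem dist_two_smul_sub_incenter_excenter {a b c : ℝ} (ha : a = dist B C) (hb : b = dist C A)
    (hc : c = dist A B) (h : a + b + c ≠ 0) (h₁ : -a + b + c ≠ 0) (hA : dist O A = R)
    (hB : dist O B = R) (hC : dist O C = R) :
    dist ((2 : ℝ) • O - univ.centerMass ![a, b, c] ![A, B, C])
      (univ.centerMass ![-a, b, c] ![A, B, C]) = 2 * R := by
  have hsum : -a ^ 2 + b * (b + c) + c * (b + c) ≠ 0 := by
    convert mul_ne_zero h h₁ using 1
    ring
  rw [dist_two_smul_sub, midpoint_centerMass_triple_neg h h₁,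
    (dist_centerMass_triple_eq_iff hA hB hC hsum).2]
  rw [← ha, ← hb, ← hc]
  ring

theorem dist_two_smul_sub_incenter_of_mem_excenters {a b c : ℝ} (ha : a = dist B C)
    (hb : b = dist C A) (hc : c = dist A B) (h₁ : a < b + c) (h₂ : b < c + a) (h₃ : c < a + b)
    (hA : dist O A = R) (hB : dist O B = R) (hC : dist O C = R) {p : V}
    (hp : p ∈ ({univ.centerMass ![-a, b, c] ![A, B, C], univ.centerMass ![a, -b, c] ![A, B, C],
      univ.centerMass ![a, b, -c] ![A, B, C]} : Set V)) :
    dist ((2 : ℝ) • O - univ.centerMass ![a, b, c] ![A, B, C]) p = 2 * R := by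
  rcases hp with rfl | rfl | rfl
  · exact dist_two_smul_sub_incenter_excenter ha hb hc (by linarith) (by linarith) hA hB hC
  · rw [← centerMass_triple_rotate a b c, ← centerMass_triple_rotate a (-b) c]
    exact dist_two_smul_sub_incenter_excenter hb hc ha (by linarith) (by linarith) hB hC hA
  · rw [centerMass_triple_rotate c a b, centerMass_triple_rotate (-c) a b]
    exact dist_two_smul_sub_incenter_excenter hc ha hb (by linarith) (by linarith) hC hA hB

theorem stmt11_general {Be I I₁ I₂ I₃ : V} {a b c : ℝ} (hABC : AffineIndependent ℝ ![A, B, C])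
    (ha : a = dist B C) (hb : b = dist C A) (hc : c = dist A B)
    (hI : I = univ.centerMass ![a, b, c] ![A, B, C])
    (hI₁ : I₁ = univ.centerMass ![-a, b, c] ![A, B, C])
    (hI₂ : I₂ = univ.centerMass ![a, -b, c] ![A, B, C])
    (hI₃ : I₃ = univ.centerMass ![a, b, -c] ![A, B, C])
    (hO_mem : O ∈ affineSpan ℝ {A, B, C}) (hO : dist O A = dist O B ∧ dist O A = dist O C)
    (hBe_mem : Be ∈ affineSpan ℝ {A, B, C})
    (hBe : dist Be I₁ = dist Be I₂ ∧ dist Be I₁ = dist Be I₃) :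
    Be = (2 : ℝ) • O - I := by
  have hBCA := affineIndependent_rotate hABC
  have h₁ := dist_lt_dist_add_dist_of_affineIndependent (affineIndependent_rotate hBCA)
  have h₂ := dist_lt_dist_add_dist_of_affineIndependent hABC
  have h₃ := dist_lt_dist_add_dist_of_affineIndependent hBCA
  rw [← ha, ← hb, ← hc] at h₁ h₂ h₃
  have hspan : affineSpan ℝ {A, B, C} ≤ affineSpan ℝ {I₁, I₂, I₃} := by
    rw [hI₁, hI₂, hI₃]
    apply affineSpan_triple_le_affineSpan_centerMass_neg <;> linarith
  have hI_mem : I ∈ affineSpan ℝ {A, B, C} :=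
    hI ▸ centerMass_triple_mem_affineSpan (by linarith) A B C
  have hJ_mem : (2 : ℝ) • O - I ∈ affineSpan ℝ {A, B, C} := by
    convert AffineMap.lineMap_mem (2 : ℝ) hI_mem hO_mem using 1
    rw [AffineMap.lineMap_apply_module]
    module
  have hJ_dist : ∀ p ∈ ({I₁, I₂, I₃} : Set V), dist ((2 : ℝ) • O - I) p = 2 * dist O A := by
    rw [hI, hI₁, hI₂, hI₃]
    exact fun p ↦ dist_two_smul_sub_incenter_of_mem_excenters ha hb hc h₁ h₂ h₃ rfl hO.1.symm
      hO.2.symm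
  have hBe_dist : ∀ p ∈ ({I₁, I₂, I₃} : Set V), dist Be p = dist Be I₁ := by
    rintro p (rfl | rfl | rfl)
    exacts [rfl, hBe.1.symm, hBe.2.symm]
  exact eq_of_mem_affineSpan_of_dist_eq (hspan hBe_mem) (hspan hJ_mem) hBe_dist hJ_dist

end Circumcircle

end CenterMass

theorem bary_eq_centerMass (A B C : EuclideanSpace ℝ (Fin 2)) (u v w : ℝ) :
    bary A B C u v w = Finset.univ.centerMass ![u, v, w] ![A, B, C] :=
  (centerMass_triple u v w A B C).symm

theorem stmt11 (A B C O Be : EuclideanSpace ℝ (Fin 2))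
    (hABC : AffineIndependent ℝ ![A, B, C])
    (a b c : ℝ) (ha : a = dist B C) (hb : b = dist C A) (hc : c = dist A B)
    (I I₁ I₂ I₃ : EuclideanSpace ℝ (Fin 2))
    (hI : I = bary A B C a b c)
    (hI₁ : I₁ = bary A B C (-a) b c)
    (hI₂ : I₂ = bary A B C a (-b) c)
    (hI₃ : I₃ = bary A B C a b (-c))
    (hO : dist O A = dist O B ∧ dist O A = dist O C)
    (hBe : dist Be I₁ = dist Be I₂ ∧ dist Be I₁ = dist Be I₃) :
    Be = (2 : ℝ) • O - I := by
  have hspan := affineSpan_triple_eq_top hABC finrank_euclideanSpace_fin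
  simp only [bary_eq_centerMass] at hI hI₁ hI₂ hI₃
  exact stmt11_general hABC ha hb hc hI hI₁ hI₂ hI₃ (by simp [hspan]) hO (by simp [hspan]) hBe
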